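/- Let E ⊂ ℝ have finite measure, let f be measurable with |f| ≤ 1 and f supported on E, and let 𝐏 be a finite collection of quartiles. Then for j ∈ {1,2,3}, size_j((⟨f, φ_{P_j}⟩)_{P∈𝐏}) ≲ sup_{P∈𝐏} |E ∩ I_P|/|I_P|, with an absolute implicit constant. -/

import Mathlib

open MeasureTheory Set

/-- The Walsh functions `w_l : ℝ → ℝ`, defined recursively by
`w_0 = χ_{[0,1)}`, `w_{2l}(x) = w_l(2x) + w_l(2x−1)`,
`w_{2l+1}(x) = w_l(2x) − w_l(2x−1)`. -/
noncomputable def walsh : ℕ → ℝ → ℝ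
  | 0, x => if x ∈ Set.Ico (0:ℝ) 1 then 1 else 0
  | (n+1), x =>
      if (n+1) % 2 = 0 then walsh ((n+1)/2) (2*x) + walsh ((n+1)/2) (2*x - 1)
      else walsh ((n+1)/2) (2*x) - walsh ((n+1)/2) (2*x - 1)
  decreasing_by all_goals exact Nat.div_lt_self (Nat.succ_pos n) one_lt_two

/-- A tile `[2^{-k}n, 2^{-k}(n+1)) × [2^k l, 2^k(l+1))`:
a half-open dyadic rectangle of area one. -/
structure Tile where
  k : ℤ
  n : ℤ
  l : ℤ
deriving DecidableEq

namespace Tile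

/-- The time interval `I_P = [2^{-k}n, 2^{-k}(n+1))` of a tile. -/
noncomputable def I (p : Tile) : Set ℝ := Set.Ico ((2:ℝ)^(-p.k) * p.n) ((2:ℝ)^(-p.k) * (p.n+1))

/-- The frequency interval `ω_P = [2^k l, 2^k(l+1))` of a tile. -/
noncomputable def freq (p : Tile) : Set ℝ := Set.Ico ((2:ℝ)^(p.k) * p.l) ((2:ℝ)^(p.k) * (p.l+1))

/-- The tile as a subset `I_P × ω_P` of the time-frequency plane. -/
noncomputable def area (p : Tile) : Set (ℝ × ℝ) := p.I ×ˢ p.freq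

/-- The length `|I_P| = 2^{-k}` of the time interval of a tile. -/
noncomputable def len (p : Tile) : ℝ := (2:ℝ)^(-p.k)

/-- The center `ξ_P` of the frequency interval of a tile. -/
noncomputable def ξ (p : Tile) : ℝ := (2:ℝ)^(p.k) * ((p.l : ℝ) + 1/2)

/-- The tile order: `p < q` iff `I_p ⊊ I_q` and `ω_q ⊆ ω_p`. -/
def lt (p q : Tile) : Prop := p.I ⊂ q.I ∧ q.freq ⊆ p.freq

/-- `p ≤ q` iff `p < q` or `p = q`. -/
def le (p q : Tile) : Prop := Tile.lt p q ∨ p = q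

/-- The Walsh wave packet `φ_P(x) = 2^{k/2} w_l(2^k x − n)` of a tile. -/
noncomputable def wp (p : Tile) : ℝ → ℝ :=
  fun x => Real.sqrt ((2:ℝ)^(p.k)) * walsh p.l.toNat ((2:ℝ)^(p.k) * x - p.n)

end Tile

/-- A quartile `[2^{-k}n, 2^{-k}(n+1)) × [2^{k+2}l, 2^{k+2}(l+1))`:
a dyadic rectangle of area four. -/
structure Quartile where
  k : ℤ
  n : ℤ
  l : ℤ
deriving DecidableEq

namespace Quartile

/-- The time interval `I_P` of a quartile. -/
noncomputable def I (P : Quartile) : Set ℝ := Set.Ico ((2:ℝ)^(-P.k) * P.n) ((2:ℝ)^(-P.k) * (P.n+1))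

/-- The length `|I_P| = 2^{-k}` of the time interval of a quartile. -/
noncomputable def len (P : Quartile) : ℝ := (2:ℝ)^(-P.k)

/-- The `j`-th sub-tile `P_j = I_P × [2^k(4l+j−1), 2^k(4l+j))` of a quartile,
for `j = 1, 2, 3`. -/
def tile (P : Quartile) (j : ℕ) : Tile := ⟨P.k, P.n, 4*P.l + ((j - 1 : ℕ) : ℤ)⟩

end Quartile

/-- `T` is an `i`-tree with top `top`: `P_i ≤ top_i` for all `P ∈ T`. -/
def IsTree (i : ℕ) (top : Quartile) (T : Finset Quartile) : Prop :=
  ∀ P ∈ T, Tile.le (P.tile i) (top.tile i)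

/-- `size_j((a_P)_{P∈Ps})`: the sup over trees `T ⊆ Ps` which are `i`-trees for
some `i ≠ j` of `(|I_T|⁻¹ Σ_{P∈T} |a_{P_j}|²)^{1/2}`. -/
noncomputable def size (Ps : Finset Quartile) (j : ℕ) (a : Quartile → ℂ) : ℝ :=
  sSup ((fun p : Quartile × Finset Quartile =>
      Real.sqrt ((∑ P ∈ p.2, ‖a P‖^2) / p.1.len)) ''
    {p | p.2 ⊆ Ps ∧ ∃ i ∈ ({1,2,3} : Set ℕ), i ≠ j ∧ IsTree i p.1 p.2})

/-- `energy_j((a_P)_{P∈Ps})`: the sup over subsets `D ⊆ Ps` with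
`{P_j : P ∈ D}` pairwise disjoint of `(Σ_{P∈D} |a_{P_j}|²)^{1/2}`. -/
noncomputable def energy (Ps : Finset Quartile) (j : ℕ) (a : Quartile → ℂ) : ℝ :=
  sSup ((fun D : Finset Quartile => Real.sqrt (∑ P ∈ D, ‖a P‖^2)) ''
    {D | D ⊆ Ps ∧ ∀ P ∈ D, ∀ P' ∈ D, P ≠ P' →
      Disjoint (P.tile j).area (P'.tile j).area})

/-- The `L^{1,∞}(I)` quasinorm `sup_{λ>0} λ |{x ∈ I : |g(x)| > λ}|`. -/
noncomputable def weakL1 (g : ℝ → ℝ) (I : Set ℝ) : ℝ :=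
  sSup {r | ∃ lam : ℝ, 0 < lam ∧ r = lam * (volume {x ∈ I | lam < |g x|}).toReal}

/-- The square function `(Σ_{P∈T} |a_{P_j}|² χ_{I_P}/|I_P|)^{1/2}` of a tree. -/
noncomputable def treeFn (T : Finset Quartile) (a : Quartile → ℂ) : ℝ → ℝ :=
  fun x => Real.sqrt (∑ P ∈ T, ‖a P‖^2 * (P.I.indicator (fun _ => (1:ℝ)) x) / P.len)

/-!
Fix an `i`-tree and multiply `f` by the Walsh function of the `i`-th tile of its top. On `I_P` this
function agrees up to sign with that of `P_i`, and products of Walsh functions are Walsh functions,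
so `⟨f, φ_{P_j}⟩` becomes the coefficient of the modulated function `F` against one of the Walsh
functions `w_1, w_2, w_3` of `I_P`. These are combinations of the Haar functions of `I_P` and of its
two halves, so it remains to bound a sum of squared Haar coefficients of `F`.

Let `a` bound the averages of `F` over the halves of the dyadic intervals of a finite family. Start
from the step function `s = 0` and, going through the family from coarse to fine, replace `s` on
each interval by the averages of `F` over its two halves. Completing the square, every replacement
raises `∫ (2⟪s, F⟫ - ‖s‖²)` by at least the squared Haar coefficient of the interval. As `‖s‖ ≤ a`
throughout, the total gain is at most `2a ∫ ‖F‖`, which is `O(δ² |⋃ I_P|)` when `F` has averages at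
most `δ` on the `I_P`.
-/

theorem walsh_eq_add (l : ℕ) (x : ℝ) :
    walsh l x = walsh (l / 2) (2 * x) + (-1) ^ l * walsh (l / 2) (2 * x - 1) := by
  rcases l with _ | l
  · simp only [Nat.zero_div, walsh, pow_zero, one_mul, mem_Ico]
    split_ifs <;> first | norm_num; done | exfalso; grind
  · rw [walsh]
    split_ifs with h
    · rw [(Nat.even_iff.2 h).neg_one_pow, one_mul]
    · rw [(Nat.odd_iff.2 (by omega)).neg_one_pow, neg_one_mul, sub_eq_add_neg]

theorem walsh_of_notMem (l : ℕ) {x : ℝ} (hx : x ∉ Ico (0 : ℝ) 1) : walsh l x = 0 := by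
  induction l using Nat.strong_induction_on generalizing x with
  | _ l ih =>
    rcases Nat.eq_zero_or_pos l with rfl | hl
    · simp only [walsh, if_neg hx]
    · have hlt : l / 2 < l := Nat.div_lt_self hl one_lt_two
      rw [walsh_eq_add, ih _ hlt, ih _ hlt, mul_zero, add_zero] <;>
        exact fun h => hx ⟨by linarith [h.1], by linarith [h.2]⟩

theorem walsh_two_mul_mul_walsh_two_mul_sub_one (m n : ℕ) (x : ℝ) :
    walsh m (2 * x) * walsh n (2 * x - 1) = 0 := by
  by_cases h : 2 * x ∈ Ico (0 : ℝ) 1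
  · rw [walsh_of_notMem n (fun h' => by linarith [h.2, h'.1]), mul_zero]
  · rw [walsh_of_notMem m h, zero_mul]

theorem walsh_mul_walsh (m n : ℕ) (x : ℝ) : walsh m x * walsh n x = walsh (m ^^^ n) x := by
  induction m using Nat.strong_induction_on generalizing n x with
  | _ m ih =>
    rcases Nat.eq_zero_or_pos m with rfl | hm
    · rw [Nat.zero_xor]
      by_cases hx : x ∈ Ico (0 : ℝ) 1
      · simp only [walsh, if_pos hx, one_mul]
      · simp only [walsh_of_notMem _ hx, mul_zero]
    · have hlt : m / 2 < m := Nat.div_lt_self hm one_lt_two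
      have hsign : (-1 : ℝ) ^ (m ^^^ n) = (-1) ^ m * (-1) ^ n := by
        rw [← pow_add, neg_one_pow_eq_pow_mod_two, Nat.xor_mod_two_eq,
          ← neg_one_pow_eq_pow_mod_two]
      rw [walsh_eq_add m, walsh_eq_add n, walsh_eq_add (m ^^^ n), Nat.xor_div_two,
        ← ih _ hlt, ← ih _ hlt, hsign]
      linear_combination
        (-1) ^ n * walsh_two_mul_mul_walsh_two_mul_sub_one (m / 2) (n / 2) x +
        (-1) ^ m * walsh_two_mul_mul_walsh_two_mul_sub_one (n / 2) (m / 2) x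

theorem walsh_sq (l : ℕ) {x : ℝ} (hx : x ∈ Ico (0 : ℝ) 1) : walsh l x ^ 2 = 1 := by
  rw [sq, walsh_mul_walsh, Nat.xor_self, walsh, if_pos hx]

theorem measurable_walsh (l : ℕ) : Measurable (walsh l) := by
  induction l using Nat.strong_induction_on with
  | _ l ih =>
    rcases Nat.eq_zero_or_pos l with rfl | hl
    · have hzero : walsh 0 = fun x => if x ∈ Ico (0 : ℝ) 1 then (1 : ℝ) else 0 := by
        funext x
        rw [walsh]
      rw [hzero]
      exact Measurable.ite measurableSet_Ico measurable_const measurable_const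
    · have := ih _ (Nat.div_lt_self hl one_lt_two)
      rw [funext (walsh_eq_add l)]
      fun_prop

theorem four_mul_add_xor_four_mul_add (l : ℕ) {a b : ℕ} (ha : a < 4) (hb : b < 4) :
    (4 * l + a) ^^^ (4 * l + b) = a ^^^ b := by
  have hdiv : ((4 * l + a) ^^^ (4 * l + b)) / 2 ^ 2 = (a ^^^ b) / 2 ^ 2 := by
    simp only [Nat.xor_div_two_pow]
    rw [show (4 * l + a) / 2 ^ 2 = l by omega, show (4 * l + b) / 2 ^ 2 = l by omega,
      show a / 2 ^ 2 = 0 by omega, show b / 2 ^ 2 = 0 by omega, Nat.xor_self, Nat.xor_self]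
  have hmod : ((4 * l + a) ^^^ (4 * l + b)) % 2 ^ 2 = (a ^^^ b) % 2 ^ 2 := by
    simp only [Nat.xor_mod_two_pow, show (4 * l + a) % 2 ^ 2 = a % 2 ^ 2 by omega,
      show (4 * l + b) % 2 ^ 2 = b % 2 ^ 2 by omega]
  omega

/-- The dyadic interval `[2^{-k} n, 2^{-k} (n + 1))`, represented by its scale and position. The
parametrization is that of the time intervals of tiles and quartiles, so the associated sets agree
definitionally. -/
structure DyadicInterval where
  k : ℤ
  n : ℤ
deriving DecidableEq

namespace DyadicInterval

/-- The points of a dyadic interval. -/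
noncomputable def toSet (I : DyadicInterval) : Set ℝ :=
  Ico ((2 : ℝ) ^ (-I.k) * I.n) ((2 : ℝ) ^ (-I.k) * (I.n + 1))

/-- The left half of a dyadic interval. -/
def left (I : DyadicInterval) : DyadicInterval := ⟨I.k + 1, 2 * I.n⟩

/-- The right half of a dyadic interval. -/
def right (I : DyadicInterval) : DyadicInterval := ⟨I.k + 1, 2 * I.n + 1⟩

/-- The dyadic interval containing `I` that is `2 ^ d` times as long. -/
def ancestor (I : DyadicInterval) (d : ℕ) : DyadicInterval := ⟨I.k - d, I.n / 2 ^ d⟩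

/-- The Walsh function `w_l` transported from `[0, 1)` to a dyadic interval, that is, the wave
packet of a tile normalized to take the values `±1`. -/
noncomputable def walshFn (l : ℕ) (I : DyadicInterval) (x : ℝ) : ℝ :=
  walsh l ((2 : ℝ) ^ I.k * x - I.n)

variable {I J : DyadicInterval} {x : ℝ}

theorem mem_toSet_iff_floor : x ∈ I.toSet ↔ ⌊(2 : ℝ) ^ I.k * x⌋ = I.n := by
  have h : (0 : ℝ) < 2 ^ I.k := by positivity
  rw [Int.floor_eq_iff, toSet, mem_Ico, zpow_neg, inv_mul_le_iff₀ h, lt_inv_mul_iff₀ h]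

theorem mem_toSet_iff_mem_Ico : x ∈ I.toSet ↔ (2 : ℝ) ^ I.k * x - I.n ∈ Ico (0 : ℝ) 1 := by
  rw [mem_toSet_iff_floor, Int.floor_eq_iff, mem_Ico, sub_nonneg, sub_lt_iff_lt_add']

theorem nonempty_toSet (I : DyadicInterval) : I.toSet.Nonempty :=
  nonempty_Ico.2 (by gcongr; linarith)

theorem measurableSet_toSet (I : DyadicInterval) : MeasurableSet I.toSet := measurableSet_Ico

theorem volume_toSet_ne_top (I : DyadicInterval) : volume I.toSet ≠ ⊤ := measure_Ico_lt_top.ne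

theorem volume_real_toSet (I : DyadicInterval) : volume.real I.toSet = (2 : ℝ) ^ (-I.k) := by
  rw [toSet, Real.volume_real_Ico_of_le (by gcongr; linarith)]
  ring

theorem subset_ancestor (I : DyadicInterval) (d : ℕ) : I.toSet ⊆ (I.ancestor d).toSet := by
  intro x hx
  rw [mem_toSet_iff_floor] at hx ⊢
  have hscale : (2 : ℝ) ^ (I.k - d) * x = (2 : ℝ) ^ I.k * x / (2 ^ d : ℕ) := by
    rw [zpow_sub₀ two_ne_zero, zpow_natCast]
    push_cast
    ring
  change ⌊(2 : ℝ) ^ (I.k - d) * x⌋ = I.n / 2 ^ d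
  rw [hscale, Int.floor_div_natCast, hx]
  norm_cast

theorem eq_of_mem_of_mem (hk : I.k = J.k) (hI : x ∈ I.toSet) (hJ : x ∈ J.toSet) : I = J := by
  rw [mem_toSet_iff_floor] at hI hJ
  rcases I with ⟨k, n⟩
  rcases J with ⟨k', n'⟩
  obtain rfl : k = k' := hk
  obtain rfl : n = n' := hI.symm.trans hJ
  rfl

theorem eq_ancestor_of_mem_of_mem (hk : J.k ≤ I.k) (hI : x ∈ I.toSet) (hJ : x ∈ J.toSet) :
    J = I.ancestor (I.k - J.k).toNat :=
  eq_of_mem_of_mem (by simp only [ancestor]; omega) hJ (subset_ancestor I _ hI)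

theorem subset_or_disjoint (hk : J.k ≤ I.k) : I.toSet ⊆ J.toSet ∨ Disjoint I.toSet J.toSet := by
  refine or_iff_not_imp_right.2 fun h => ?_
  obtain ⟨x, hI, hJ⟩ := not_disjoint_iff.1 h
  rw [eq_ancestor_of_mem_of_mem hk hI hJ]
  exact subset_ancestor I _

theorem toSet_subset_iff : I.toSet ⊆ J.toSet ↔ ∃ d : ℕ, J = I.ancestor d := by
  refine ⟨fun h => ?_, ?_⟩
  · obtain ⟨x, hx⟩ := I.nonempty_toSet
    have hlen := measureReal_mono h J.volume_toSet_ne_top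
    rw [volume_real_toSet, volume_real_toSet, zpow_le_zpow_iff_right₀ one_lt_two] at hlen
    exact ⟨_, eq_ancestor_of_mem_of_mem (by omega) hx (h hx)⟩
  · rintro ⟨d, rfl⟩
    exact subset_ancestor I d

theorem left_union_right (I : DyadicInterval) : I.left.toSet ∪ I.right.toSet = I.toSet := by
  ext x
  simp only [mem_union, mem_toSet_iff_mem_Ico, left, right, mem_Ico, zpow_add_one₀ (two_ne_zero' ℝ),
    mul_right_comm _ (2 : ℝ)]
  push_cast
  generalize (2 : ℝ) ^ I.k * x = t
  grind

theorem disjoint_left_right (I : DyadicInterval) : Disjoint I.left.toSet I.right.toSet :=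
  disjoint_left.2 fun _ hl hr => by
    have := congrArg n (eq_of_mem_of_mem (I := I.left) (J := I.right) rfl hl hr)
    simp only [left, right] at this
    omega

theorem left_subset (I : DyadicInterval) : I.left.toSet ⊆ I.toSet :=
  subset_union_left.trans_eq I.left_union_right

theorem right_subset (I : DyadicInterval) : I.right.toSet ⊆ I.toSet :=
  subset_union_right.trans_eq I.left_union_right

theorem left_injective : Function.Injective left := by
  rintro ⟨k, n⟩ ⟨k', n'⟩ h
  simp only [left, mk.injEq] at h ⊢
  omega

theorem right_injective : Function.Injective right := by
  rintro ⟨k, n⟩ ⟨k', n'⟩ h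
  simp only [right, mk.injEq] at h ⊢
  omega

theorem eq_left_or_eq_right_ancestor_one (I : DyadicInterval) :
    I = (I.ancestor 1).left ∨ I = (I.ancestor 1).right := by
  rcases I with ⟨k, n⟩
  simp only [ancestor, left, right, mk.injEq]
  omega

theorem ancestor_succ (I : DyadicInterval) (d : ℕ) :
    I.ancestor (d + 1) = (I.ancestor 1).ancestor d := by
  simp only [ancestor, mk.injEq, pow_succ', pow_zero, mul_one]
  exact ⟨by push_cast; ring, (Int.ediv_ediv_of_nonneg zero_le_two).symm⟩

theorem walshFn_of_notMem (l : ℕ) (hx : x ∉ I.toSet) : walshFn l I x = 0 :=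
  walsh_of_notMem l (mem_toSet_iff_mem_Ico.not.1 hx)

theorem walshFn_mul_walshFn (m n : ℕ) (I : DyadicInterval) (x : ℝ) :
    walshFn m I x * walshFn n I x = walshFn (m ^^^ n) I x :=
  walsh_mul_walsh m n _

theorem walshFn_sq (l : ℕ) (hx : x ∈ I.toSet) : walshFn l I x ^ 2 = 1 :=
  walsh_sq l (mem_toSet_iff_mem_Ico.1 hx)

theorem norm_walshFn (l : ℕ) (hx : x ∈ I.toSet) : ‖walshFn l I x‖ = 1 :=
  (abs_pow_eq_one _ two_ne_zero).1 (by rw [walshFn_sq l hx, abs_one])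

theorem norm_walshFn_le (l : ℕ) (I : DyadicInterval) (x : ℝ) : ‖walshFn l I x‖ ≤ 1 := by
  by_cases hx : x ∈ I.toSet
  · exact (norm_walshFn l hx).le
  · rw [walshFn_of_notMem l hx, norm_zero]
    exact zero_le_one

theorem measurable_walshFn (l : ℕ) (I : DyadicInterval) : Measurable (walshFn l I) :=
  (measurable_walsh l).comp (by fun_prop)

theorem walshFn_eq_add (l : ℕ) (I : DyadicInterval) (x : ℝ) :
    walshFn l I x = walshFn (l / 2) I.left x + (-1) ^ l * walshFn (l / 2) I.right x := by
  simp only [walshFn, left, right, walsh_eq_add l, zpow_add_one₀ (two_ne_zero' ℝ)]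
  push_cast
  ring_nf

theorem walshFn_of_mem_left (l : ℕ) (hx : x ∈ I.left.toSet) :
    walshFn l I x = walshFn (l / 2) I.left x := by
  rw [walshFn_eq_add, walshFn_of_notMem _ (disjoint_left.1 I.disjoint_left_right hx), mul_zero,
    add_zero]

theorem walshFn_of_mem_right (l : ℕ) (hx : x ∈ I.right.toSet) :
    walshFn l I x = (-1) ^ l * walshFn (l / 2) I.right x := by
  rw [walshFn_eq_add, walshFn_of_notMem _ (disjoint_right.1 I.disjoint_left_right hx), zero_add]

theorem exists_walshFn_ancestor_eq (l : ℕ) (I : DyadicInterval) (d : ℕ) :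
    ∃ s : ℝ, |s| = 1 ∧
      ∀ x ∈ I.toSet, walshFn l (I.ancestor d) x = s * walshFn (l / 2 ^ d) I x := by
  induction d generalizing I with
  | zero => exact ⟨1, abs_one, fun x _ => by simp [ancestor]⟩
  | succ d ih =>
    have hhalf : ∃ t : ℝ, |t| = 1 ∧ ∀ x ∈ I.toSet,
        walshFn (l / 2 ^ d) (I.ancestor 1) x = t * walshFn (l / 2 ^ d / 2) I x := by
      rcases I.eq_left_or_eq_right_ancestor_one with h | h
      · exact ⟨1, abs_one, fun x hx => by rw [walshFn_of_mem_left _ (h ▸ hx), ← h, one_mul]⟩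
      · exact ⟨_, abs_neg_one_pow _, fun x hx => by rw [walshFn_of_mem_right _ (h ▸ hx), ← h]⟩
    obtain ⟨t, ht, hparent⟩ := hhalf
    obtain ⟨s, hs, hanc⟩ := ih (I.ancestor 1)
    refine ⟨s * t, by rw [abs_mul, hs, ht, one_mul], fun x hx => ?_⟩
    rw [ancestor_succ, hanc x (subset_ancestor I 1 hx), hparent x hx, mul_assoc,
      Nat.div_div_eq_div_mul, pow_succ]


section Haar

variable {H : Type*} [NormedAddCommGroup H] [InnerProductSpace ℝ H] {F : ℝ → H} {a : ℝ}

/-- The squared norm of the `L²`-normalized Haar coefficient of `F` on the interval `I`. -/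
noncomputable def haarEnergy (F : ℝ → H) (I : DyadicInterval) : ℝ :=
  (2 : ℝ) ^ I.k * ‖(∫ x in I.left.toSet, F x) - ∫ x in I.right.toSet, F x‖ ^ 2

/-- The integral of `2⟪s, F⟫ - ‖s‖²` over `J`: a lower bound for the `L²` energy of `F` on `J`,
obtained by testing `F` against the constant `s`. -/
noncomputable def dualEnergy (F : ℝ → H) (s : H) (J : Set ℝ) : ℝ :=
  2 * inner ℝ s (∫ x in J, F x) - ‖s‖ ^ 2 * volume.real J

theorem haarEnergy_nonneg (F : ℝ → H) (I : DyadicInterval) : 0 ≤ haarEnergy F I := by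
  unfold haarEnergy
  positivity

theorem setIntegral_left_add_right {E : Type*} [NormedAddCommGroup E] [NormedSpace ℝ E]
    {G : ℝ → E} (hG : IntegrableOn G I.toSet) :
    (∫ x in I.left.toSet, G x) + ∫ x in I.right.toSet, G x = ∫ x in I.toSet, G x := by
  rw [← setIntegral_union I.disjoint_left_right I.right.measurableSet_toSet
    (hG.mono_set I.left_subset) (hG.mono_set I.right_subset), left_union_right]

theorem dualEnergy_le (F : ℝ → H) {s : H} (hs : ‖s‖ ≤ a) (J : Set ℝ) :
    dualEnergy F s J ≤ 2 * a * ∫ x in J, ‖F x‖ := by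
  have hinner : inner ℝ s (∫ x in J, F x) ≤ a * ∫ x in J, ‖F x‖ :=
    (real_inner_le_norm _ _).trans <|
      mul_le_mul hs (norm_integral_le_integral_norm _) (norm_nonneg _) ((norm_nonneg s).trans hs)
  have : 0 ≤ ‖s‖ ^ 2 * volume.real J := by positivity
  unfold dualEnergy
  linarith

theorem dualEnergy_sdiff_add {J K : Set ℝ} (hK : MeasurableSet K) (hF : IntegrableOn F J)
    (hJ : volume J ≠ ⊤) (hKJ : K ⊆ J) (s : H) :
    dualEnergy F s (J \ K) + dualEnergy F s K = dualEnergy F s J := by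
  unfold dualEnergy
  rw [setIntegral_sdiff hK hF hKJ, measureReal_sdiff hKJ hK hJ,
    inner_sub_right]
  ring

theorem dualEnergy_setAverage (F : ℝ → H) (J : Set ℝ) :
    dualEnergy F (⨍ x in J, F x) J = (volume.real J)⁻¹ * ‖∫ x in J, F x‖ ^ 2 := by
  rw [dualEnergy, setAverage_eq, real_inner_smul_left, real_inner_self_eq_norm_sq, norm_smul,
    mul_pow, Real.norm_eq_abs, sq_abs]
  rcases eq_or_ne (volume.real J) 0 with h | h
  · simp [h]
  · field_simp
    ring

theorem norm_sub_sq_add_inner_le (u v s : H) {ℓ : ℝ} (hℓ : 0 < ℓ) :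
    (2 * ℓ)⁻¹ * ‖u - v‖ ^ 2 + (2 * inner ℝ s (u + v) - ‖s‖ ^ 2 * (2 * ℓ)) ≤
      ℓ⁻¹ * ‖u‖ ^ 2 + ℓ⁻¹ * ‖v‖ ^ 2 := by
  have hsq : 0 ≤ (2 * ℓ)⁻¹ * ‖u + v - (2 * ℓ) • s‖ ^ 2 := by positivity
  have hpar := parallelogram_law_with_norm ℝ u v
  rw [norm_sub_sq_real, real_inner_smul_right, real_inner_comm, norm_smul, mul_pow,
    Real.norm_eq_abs, sq_abs] at hsq
  calc (2 * ℓ)⁻¹ * ‖u - v‖ ^ 2 + (2 * inner ℝ s (u + v) - ‖s‖ ^ 2 * (2 * ℓ))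
    _ = (2 * ℓ)⁻¹ * (2 * (‖u‖ ^ 2 + ‖v‖ ^ 2)) - (2 * ℓ)⁻¹ *
        (‖u + v‖ ^ 2 - 2 * (2 * ℓ * inner ℝ s (u + v)) + (2 * ℓ) ^ 2 * ‖s‖ ^ 2) := by
      field_simp
      linear_combination hpar
    _ ≤ (2 * ℓ)⁻¹ * (2 * (‖u‖ ^ 2 + ‖v‖ ^ 2)) := sub_le_self _ hsq
    _ = ℓ⁻¹ * ‖u‖ ^ 2 + ℓ⁻¹ * ‖v‖ ^ 2 := by
      field_simp

theorem haarEnergy_add_dualEnergy_le (hF : IntegrableOn F I.toSet) (s : H) :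
    haarEnergy F I + dualEnergy F s I.toSet ≤
      dualEnergy F (⨍ x in I.left.toSet, F x) I.left.toSet +
        dualEnergy F (⨍ x in I.right.toSet, F x) I.right.toSet := by
  have hlen : (2 : ℝ) ^ (-I.k) = 2 * volume.real I.left.toSet := by
    rw [volume_real_toSet, left, ← zpow_one_add₀ two_ne_zero]
    ring_nf
  have hright : volume.real I.right.toSet = volume.real I.left.toSet := by
    simp only [volume_real_toSet, left, right]
  have hpos : 0 < volume.real I.left.toSet := by
    rw [volume_real_toSet]
    positivity
  rw [dualEnergy_setAverage, dualEnergy_setAverage, hright, haarEnergy, dualEnergy,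
    volume_real_toSet I, hlen, ← setIntegral_left_add_right hF, ← neg_neg I.k, zpow_neg, hlen]
  exact norm_sub_sq_add_inner_le _ _ s hpos

theorem subset_sdiff_or_subset_half {A : Set ℝ} (hk : J.k ≤ I.k) (hne : I ≠ J)
    (hIA : I.toSet ⊆ A) :
    I.toSet ⊆ A \ J.toSet ∨ I.toSet ⊆ J.left.toSet ∨ I.toSet ⊆ J.right.toSet := by
  rcases hk.eq_or_lt with hk | hk
  · exact .inl <| subset_sdiff.2 ⟨hIA, disjoint_left.2 fun _ hI hJ =>
      hne (eq_of_mem_of_mem hk.symm hI hJ)⟩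
  · rcases subset_or_disjoint (I := I) (J := J.left) hk with hl | hl
    · exact .inr (.inl hl)
    rcases subset_or_disjoint (I := I) (J := J.right) hk with hr | hr
    · exact .inr (.inr hr)
    · exact .inl (subset_sdiff.2 ⟨hIA, J.left_union_right ▸ hl.union_right hr⟩)

theorem sum_haarEnergy_add_dualEnergy_le (S : Finset DyadicInterval)
    (hS : ∀ K ∈ S, ‖⨍ x in K.left.toSet, F x‖ ≤ a ∧ ‖⨍ x in K.right.toSet, F x‖ ≤ a)
    {A : Set ℝ} (hF : IntegrableOn F A) (hA : volume A ≠ ⊤)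
    (hSA : ∀ K ∈ S, K.toSet ⊆ A) {s : H} (hs : ‖s‖ ≤ a) :
    ∑ K ∈ S, haarEnergy F K + dualEnergy F s A ≤ 2 * a * ∫ x in A, ‖F x‖ := by
  classical
  induction S using Finset.strongInduction generalizing A s with
  | H S ih =>
  rcases S.eq_empty_or_nonempty with rfl | hne
  · simpa using dualEnergy_le F hs A
  obtain ⟨I, hI, hmin⟩ := S.exists_min_image k hne
  have hIA := hSA I hI
  have hFI := hF.mono_set hIA
  have ihI : ∀ {B : Set ℝ} {t : H}, B ⊆ A → ‖t‖ ≤ a →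
      ∑ K ∈ S.erase I with K.toSet ⊆ B, haarEnergy F K + dualEnergy F t B ≤
        2 * a * ∫ x in B, ‖F x‖ := fun hBA ht =>
    ih _ ((Finset.filter_subset _ _).trans_ssubset (Finset.erase_ssubset hI))
      (fun K hK => hS K (Finset.mem_of_mem_erase (Finset.mem_filter.1 hK).1))
      (hF.mono_set hBA) (measure_ne_top_of_subset hBA hA)
      (fun K hK => (Finset.mem_filter.1 hK).2) ht
  have hcover : S.erase I ⊆ {K ∈ S.erase I | K.toSet ⊆ A \ I.toSet} ∪
      ({K ∈ S.erase I | K.toSet ⊆ I.left.toSet} ∪ {K ∈ S.erase I | K.toSet ⊆ I.right.toSet}) := by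
    rw [← Finset.filter_or, ← Finset.filter_or, Finset.filter_true_of_mem]
    intro K hK
    obtain ⟨hKI, hKS⟩ := Finset.mem_erase.1 hK
    exact subset_sdiff_or_subset_half (hmin K hKS) hKI (hSA K hKS)
  have hunion : ∀ B C : Finset DyadicInterval, ∑ K ∈ B ∪ C, haarEnergy F K ≤
      ∑ K ∈ B, haarEnergy F K + ∑ K ∈ C, haarEnergy F K := fun B C => by
    rw [← Finset.sum_union_inter]
    exact le_add_of_nonneg_right (Finset.sum_nonneg fun K _ => haarEnergy_nonneg F K)
  have hsum := (Finset.sum_le_sum_of_subset_of_nonneg hcover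
    fun K _ _ => haarEnergy_nonneg F K).trans <| (hunion _ _).trans
      (add_le_add_right (hunion _ _) _)
  have hnorm : ∫ x in A, ‖F x‖ = (∫ x in A \ I.toSet, ‖F x‖) +
      ((∫ x in I.left.toSet, ‖F x‖) + ∫ x in I.right.toSet, ‖F x‖) := by
    rw [setIntegral_left_add_right hFI.norm,
      setIntegral_sdiff I.measurableSet_toSet hF.norm hIA, sub_add_cancel]
  rw [← Finset.add_sum_erase S _ hI, ← dualEnergy_sdiff_add I.measurableSet_toSet hF hA hIA, hnorm]
  linarith [haarEnergy_add_dualEnergy_le hFI s, ihI (B := A \ I.toSet) sdiff_subset hs,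
    ihI (I.left_subset.trans hIA) (hS I hI).1, ihI (I.right_subset.trans hIA) (hS I hI).2]

theorem sum_haarEnergy_le (ha : 0 ≤ a) (S : Finset DyadicInterval)
    (hS : ∀ K ∈ S, ‖⨍ x in K.left.toSet, F x‖ ≤ a ∧ ‖⨍ x in K.right.toSet, F x‖ ≤ a)
    {A : Set ℝ} (hF : IntegrableOn F A) (hA : volume A ≠ ⊤) (hSA : ∀ K ∈ S, K.toSet ⊆ A) :
    ∑ K ∈ S, haarEnergy F K ≤ 2 * a * ∫ x in A, ‖F x‖ := by
  simpa [dualEnergy] using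
    sum_haarEnergy_add_dualEnergy_le S hS hF hA hSA (s := 0) (norm_zero.trans_le ha)

theorem norm_setAverage_le {δ : ℝ} (hF : IntegrableOn F I.toSet)
    (hδ : ∫ x in I.toSet, ‖F x‖ ≤ δ * volume.real I.toSet) (hJI : J.toSet ⊆ I.toSet) :
    ‖⨍ x in J.toSet, F x‖ ≤ 2 ^ (J.k - I.k) * δ := by
  rw [volume_real_toSet] at hδ
  rw [setAverage_eq, volume_real_toSet, norm_smul, Real.norm_of_nonneg (by positivity),
    zpow_neg, inv_inv]
  calc (2 : ℝ) ^ J.k * ‖∫ x in J.toSet, F x‖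
    _ ≤ 2 ^ J.k * (δ * 2 ^ (-I.k)) := by
      gcongr
      exact (norm_integral_le_integral_norm _).trans <|
        (setIntegral_mono_set hF.norm (by filter_upwards with x using norm_nonneg _)
          hJI.eventuallyLE).trans hδ
    _ = 2 ^ (J.k - I.k) * δ := by
      rw [sub_eq_add_neg, zpow_add₀ two_ne_zero]
      ring

theorem setIntegral_biUnion_le {S : Finset DyadicInterval} {g : ℝ → ℝ} {δ : ℝ}
    (hg : ∀ I ∈ S, IntegrableOn g I.toSet)
    (hδ : ∀ I ∈ S, ∫ x in I.toSet, g x ≤ δ * volume.real I.toSet) :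
    ∫ x in ⋃ I ∈ S, I.toSet, g x ≤ δ * volume.real (⋃ I ∈ S, I.toSet) := by
  induction S using Finset.induction_on_max_value k with
  | empty => simp
  | insert I S _ hmax ih =>
    simp only [Finset.forall_mem_insert] at hg hδ
    replace ih := ih hg.2 hδ.2
    rw [Finset.set_biUnion_insert]
    by_cases hsub : ∃ J ∈ S, I.toSet ⊆ J.toSet
    · obtain ⟨J, hJ, hIJ⟩ := hsub
      rwa [union_eq_right.2 (hIJ.trans (Finset.subset_set_biUnion_of_mem (f := toSet) hJ))]
    · have hdisj : Disjoint I.toSet (⋃ J ∈ S, J.toSet) := disjoint_iUnion₂_right.2 fun J hJ =>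
        (subset_or_disjoint (hmax J hJ)).resolve_left fun h => hsub ⟨J, hJ, h⟩
      have hmeas : MeasurableSet (⋃ J ∈ S, J.toSet) :=
        S.measurableSet_biUnion fun J _ => J.measurableSet_toSet
      have htop : volume (⋃ J ∈ S, J.toSet) ≠ ⊤ :=
        (measure_biUnion_lt_top S.finite_toSet fun J _ => J.volume_toSet_ne_top.lt_top).ne
      rw [setIntegral_union hdisj hmeas hg.1 (integrableOn_finset_iUnion.2 hg.2),
        measureReal_union hdisj hmeas I.volume_toSet_ne_top htop, mul_add]
      exact add_le_add hδ.1 ih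

theorem sum_haarEnergy_comp_le {S : Finset DyadicInterval} {δ : ℝ} (hδ : 0 ≤ δ)
    (hF : ∀ I ∈ S, IntegrableOn F I.toSet)
    (hSδ : ∀ I ∈ S, ∫ x in I.toSet, ‖F x‖ ≤ δ * volume.real I.toSet)
    {φ : DyadicInterval → DyadicInterval} (hφ : InjOn φ S)
    (hsub : ∀ I, (φ I).toSet ⊆ I.toSet) (hk : ∀ I, (φ I).k ≤ I.k + 1) :
    ∑ I ∈ S, haarEnergy F (φ I) ≤ 8 * δ ^ 2 * volume.real (⋃ I ∈ S, I.toSet) := by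
  have hhalf : ∀ I ∈ S, ∀ J : DyadicInterval, J.toSet ⊆ (φ I).toSet → J.k = (φ I).k + 1 →
      ‖⨍ x in J.toSet, F x‖ ≤ 4 * δ := fun I hI J hJ hJk =>
    (norm_setAverage_le (hF I hI) (hSδ I hI) (hJ.trans (hsub I))).trans <| by
      gcongr
      calc (2 : ℝ) ^ (J.k - I.k) ≤ 2 ^ (2 : ℤ) :=
            zpow_le_zpow_right₀ one_le_two (by linarith [hk I])
        _ = 4 := by norm_num
  have htop : volume (⋃ I ∈ S, I.toSet) ≠ ⊤ :=
    (measure_biUnion_lt_top S.finite_toSet fun J _ => J.volume_toSet_ne_top.lt_top).ne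
  rw [← Finset.sum_image hφ]
  calc ∑ K ∈ S.image φ, haarEnergy F K
    _ ≤ 2 * (4 * δ) * ∫ x in ⋃ I ∈ S, I.toSet, ‖F x‖ :=
      sum_haarEnergy_le (by positivity) _
        (Finset.forall_mem_image.2 fun I hI =>
          ⟨hhalf I hI _ (left_subset _) rfl, hhalf I hI _ (right_subset _) rfl⟩)
        (integrableOn_finset_iUnion.2 hF) htop
        (Finset.forall_mem_image.2 fun I hI =>
          (hsub I).trans (subset_biUnion_of_mem (u := toSet) hI))
    _ ≤ 2 * (4 * δ) * (δ * volume.real (⋃ I ∈ S, I.toSet)) := by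
      gcongr
      exact setIntegral_biUnion_le (fun I hI => (hF I hI).norm) hSδ
    _ = 8 * δ ^ 2 * volume.real (⋃ I ∈ S, I.toSet) := by ring

theorem integrableOn_walshFn_smul {A : Set ℝ} (l : ℕ) (I : DyadicInterval)
    (hF : IntegrableOn F A) : IntegrableOn (fun x => walshFn l I x • F x) A :=
  Integrable.bdd_smul hF 1 (measurable_walshFn l I).aestronglyMeasurable
    (.of_forall (norm_walshFn_le l I))

theorem setIntegral_walshFn_zero_smul (F : ℝ → H) (I : DyadicInterval) :
    ∫ x in I.toSet, walshFn 0 I x • F x = ∫ x in I.toSet, F x :=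
  setIntegral_congr_fun I.measurableSet_toSet fun x hx => by
    simp only [walshFn, walsh, if_pos (mem_toSet_iff_mem_Ico.1 hx), one_smul]

theorem setIntegral_walshFn_smul (l : ℕ) (hF : IntegrableOn F I.toSet) :
    ∫ x in I.toSet, walshFn l I x • F x =
      (∫ x in I.left.toSet, walshFn (l / 2) I.left x • F x) +
        (-1 : ℝ) ^ l • ∫ x in I.right.toSet, walshFn (l / 2) I.right x • F x := by
  rw [← setIntegral_left_add_right (integrableOn_walshFn_smul l I hF), ← integral_smul]
  congr 1
  · exact setIntegral_congr_fun I.left.measurableSet_toSet fun x hx => by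
      simp only [walshFn_of_mem_left l hx]
  · exact setIntegral_congr_fun I.right.measurableSet_toSet fun x hx => by
      simp only [walshFn_of_mem_right l hx, mul_smul]

theorem haarEnergy_eq (hF : IntegrableOn F I.toSet) :
    haarEnergy F I = 2 ^ I.k * ‖∫ x in I.toSet, walshFn 1 I x • F x‖ ^ 2 := by
  rw [setIntegral_walshFn_smul 1 hF, Nat.div_eq_of_lt one_lt_two, setIntegral_walshFn_zero_smul,
    setIntegral_walshFn_zero_smul, pow_one, neg_one_smul, ← sub_eq_add_neg, haarEnergy]

theorem norm_setIntegral_walshFn_smul_sq_le {c : ℕ} (hc₀ : 0 < c) (hc : c < 4)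
    (hF : IntegrableOn F I.toSet) :
    (2 : ℝ) ^ I.k * ‖∫ x in I.toSet, walshFn c I x • F x‖ ^ 2 ≤
      haarEnergy F I + haarEnergy F I.left + haarEnergy F I.right := by
  have hI := haarEnergy_nonneg F I
  have hl := haarEnergy_nonneg F I.left
  have hr := haarEnergy_nonneg F I.right
  rcases Nat.lt_or_ge c 2 with hc₂ | hc₂
  · obtain rfl : c = 1 := by omega
    rw [← haarEnergy_eq hF]
    linarith
  · rw [setIntegral_walshFn_smul c hF, show c / 2 = 1 by omega]
    rw [haarEnergy_eq (hF.mono_set I.left_subset), haarEnergy_eq (hF.mono_set I.right_subset)]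
    set u := ∫ x in I.left.toSet, walshFn 1 I.left x • F x
    set v := ∫ x in I.right.toSet, walshFn 1 I.right x • F x
    calc (2 : ℝ) ^ I.k * ‖u + (-1 : ℝ) ^ c • v‖ ^ 2
      _ ≤ 2 ^ I.k * (‖u‖ + ‖v‖) ^ 2 := by
        gcongr
        refine (norm_add_le _ _).trans_eq ?_
        rw [norm_smul, Real.norm_eq_abs, abs_neg_one_pow, one_mul]
      _ ≤ 2 ^ I.k * (2 * (‖u‖ ^ 2 + ‖v‖ ^ 2)) := by
        gcongr
        exact add_sq_le
      _ = 2 ^ (I.k + 1) * ‖u‖ ^ 2 + 2 ^ (I.k + 1) * ‖v‖ ^ 2 := by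
        rw [zpow_add_one₀ two_ne_zero]
        ring
      _ ≤ haarEnergy F I + 2 ^ (I.k + 1) * ‖u‖ ^ 2 + 2 ^ (I.k + 1) * ‖v‖ ^ 2 := by
        linarith

theorem sum_norm_setIntegral_walshFn_smul_sq_le {S : Finset DyadicInterval} {c : ℕ} (hc₀ : 0 < c)
    (hc : c < 4) {δ : ℝ} (hδ : 0 ≤ δ) (hF : ∀ I ∈ S, IntegrableOn F I.toSet)
    (hSδ : ∀ I ∈ S, ∫ x in I.toSet, ‖F x‖ ≤ δ * volume.real I.toSet) :
    ∑ I ∈ S, (2 : ℝ) ^ I.k * ‖∫ x in I.toSet, walshFn c I x • F x‖ ^ 2 ≤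
      24 * δ ^ 2 * volume.real (⋃ I ∈ S, I.toSet) := by
  have hle := Finset.sum_le_sum fun I hI => norm_setIntegral_walshFn_smul_sq_le hc₀ hc (hF I hI)
  rw [Finset.sum_add_distrib, Finset.sum_add_distrib] at hle
  have hself := sum_haarEnergy_comp_le hδ hF hSδ (injOn_id _) (fun _ => subset_rfl)
    (fun I => (lt_add_one I.k).le)
  have hleft := sum_haarEnergy_comp_le hδ hF hSδ left_injective.injOn left_subset
    (fun _ => le_rfl)
  have hright := sum_haarEnergy_comp_le hδ hF hSδ right_injective.injOn right_subset
    (fun _ => le_rfl)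
  simp only [id] at hself
  linarith

end Haar

end DyadicInterval

open DyadicInterval

namespace Tile

/-- The time interval of a tile as a dyadic interval. -/
def timeInterval (p : Tile) : DyadicInterval := ⟨p.k, p.n⟩

/-- The frequency interval of a tile as a dyadic interval; its scale is `-p.k` because it has length
`2 ^ p.k`. -/
def freqInterval (p : Tile) : DyadicInterval := ⟨-p.k, p.l⟩

theorem toSet_freqInterval (p : Tile) : p.freqInterval.toSet = p.freq := by
  simp only [toSet, freqInterval, freq, neg_neg]

theorem le.I_subset {p q : Tile} (h : p.le q) : p.I ⊆ q.I := by
  rcases h with h | rfl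
  exacts [h.1.subset, subset_rfl]

theorem le.freqInterval_subset {p q : Tile} (h : p.le q) :
    q.freqInterval.toSet ⊆ p.freqInterval.toSet := by
  rcases h with h | rfl
  · simpa only [toSet_freqInterval] using h.2
  · exact subset_rfl

theorem le.exists_ancestor {p q : Tile} (h : p.le q) :
    ∃ d : ℕ, q.timeInterval = p.timeInterval.ancestor d ∧ p.l = q.l / 2 ^ d := by
  have htime : p.timeInterval.toSet ⊆ q.timeInterval.toSet := h.I_subset
  obtain ⟨d, hd⟩ := toSet_subset_iff.1 htime
  obtain ⟨e, he⟩ := toSet_subset_iff.1 h.freqInterval_subset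
  have hk := congrArg DyadicInterval.k hd
  simp only [timeInterval, ancestor, freqInterval, DyadicInterval.mk.injEq] at hk he
  obtain rfl : e = d := by omega
  exact ⟨e, hd, he.2⟩

theorem le.exists_walshFn_eq {p q : Tile} (h : p.le q) (hp : 0 ≤ p.l) :
    ∃ s : ℝ, |s| = 1 ∧ ∀ x ∈ p.I,
      walshFn q.l.toNat q.timeInterval x = s * walshFn p.l.toNat p.timeInterval x := by
  obtain ⟨d, hI, hl⟩ := h.exists_ancestor
  have hq : 0 ≤ q.l := by
    rw [hl] at hp
    exact (Int.ediv_nonneg_iff_of_pos (by positivity)).1 hp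
  have hl' : p.l.toNat = q.l.toNat / 2 ^ d := by
    rw [hl]
    lift q.l to ℕ using hq with m
    norm_cast
  rw [hI, hl']
  exact exists_walshFn_ancestor_eq _ p.timeInterval d

theorem norm_integral_wp_smul_sq {H : Type*} [NormedAddCommGroup H] [InnerProductSpace ℝ H]
    (p : Tile) (f : ℝ → H) :
    ‖∫ x, p.wp x • f x‖ ^ 2 =
      2 ^ p.k * ‖∫ x in p.I, walshFn p.l.toNat p.timeInterval x • f x‖ ^ 2 := by
  have hsupp : ∀ x ∉ p.I, walshFn p.l.toNat p.timeInterval x • f x = 0 := fun x hx => by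
    rw [walshFn_of_notMem _ hx, zero_smul]
  have hwp : ∀ x, p.wp x • f x =
      √((2 : ℝ) ^ p.k) • walshFn p.l.toNat p.timeInterval x • f x := fun x => mul_smul _ _ _
  simp only [hwp]
  rw [integral_smul, norm_smul, mul_pow, Real.norm_eq_abs, sq_abs, Real.sq_sqrt (by positivity),
    setIntegral_eq_integral_of_forall_compl_eq_zero hsupp]

theorem ofReal_integral_mul_wp (p : Tile) (f : ℝ → ℝ) :
    ((∫ x, f x * p.wp x : ℝ) : ℂ) = ∫ x, p.wp x • (f x : ℂ) := by
  simp only [← integral_complex_ofReal, Complex.real_smul, mul_comm (f _), Complex.ofReal_mul]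

end Tile

namespace Quartile

/-- The time interval of a quartile as a dyadic interval. -/
def timeInterval (P : Quartile) : DyadicInterval := ⟨P.k, P.n⟩

theorem volume_real_timeInterval (P : Quartile) : volume.real P.timeInterval.toSet = P.len :=
  volume_real_toSet _

theorem len_pos (P : Quartile) : 0 < P.len :=
  zpow_pos two_pos _

theorem toNat_tile_l {P : Quartile} (hP : 0 ≤ P.l) (j : ℕ) :
    (P.tile j).l.toNat = 4 * P.l.toNat + (j - 1) := by
  simp only [tile]
  omega

theorem exists_walshFn_tile_eq {P Q : Quartile} {i j : ℕ} (hi : i ∈ ({1, 2, 3} : Set ℕ))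
    (hj : j ∈ ({1, 2, 3} : Set ℕ)) (hP : 0 ≤ P.l) (h : (P.tile i).le (Q.tile i)) :
    ∃ s : ℝ, |s| = 1 ∧ ∀ x ∈ P.I,
      walshFn (P.tile j).l.toNat P.timeInterval x =
        s * (walshFn ((i - 1) ^^^ (j - 1)) P.timeInterval x *
          walshFn (Q.tile i).l.toNat Q.timeInterval x) := by
  have hi₄ : i - 1 < 4 := by rcases hi with rfl | rfl | rfl <;> norm_num
  have hj₄ : j - 1 < 4 := by rcases hj with rfl | rfl | rfl <;> norm_num
  have hPi : 0 ≤ (P.tile i).l := by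
    simp only [tile]
    positivity
  obtain ⟨s, hs, hQ⟩ := h.exists_walshFn_eq hPi
  refine ⟨s, hs, fun x hx => ?_⟩
  have hs₂ : s ^ 2 = 1 := by rw [← sq_abs, hs, one_pow]
  have hQx : walshFn (Q.tile i).l.toNat Q.timeInterval x =
      s * walshFn (P.tile i).l.toNat P.timeInterval x := hQ x hx
  have hsq := walshFn_sq (I := P.timeInterval) (P.tile i).l.toNat hx
  rw [hQx, ← four_mul_add_xor_four_mul_add P.l.toNat hi₄ hj₄, ← toNat_tile_l hP,
    ← toNat_tile_l hP, ← walshFn_mul_walshFn]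
  linear_combination
    (-(s ^ 2) * hsq - hs₂) * walshFn (P.tile j).l.toNat P.timeInterval x

theorem norm_integral_wp_smul_sq_eq {H : Type*} [NormedAddCommGroup H] [InnerProductSpace ℝ H]
    {P Q : Quartile} {i j : ℕ} (hi : i ∈ ({1, 2, 3} : Set ℕ)) (hj : j ∈ ({1, 2, 3} : Set ℕ))
    (hP : 0 ≤ P.l) (h : (P.tile i).le (Q.tile i)) (f : ℝ → H) :
    ‖∫ x, (P.tile j).wp x • f x‖ ^ 2 =
      2 ^ P.k * ‖∫ x in P.I, walshFn ((i - 1) ^^^ (j - 1)) P.timeInterval x •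
        walshFn (Q.tile i).l.toNat Q.timeInterval x • f x‖ ^ 2 := by
  obtain ⟨s, hs, hwalsh⟩ := exists_walshFn_tile_eq hi hj hP h
  have hint : ∫ x in P.I, walshFn (P.tile j).l.toNat P.timeInterval x • f x =
      s • ∫ x in P.I, walshFn ((i - 1) ^^^ (j - 1)) P.timeInterval x •
        walshFn (Q.tile i).l.toNat Q.timeInterval x • f x := by
    rw [← integral_smul]
    exact setIntegral_congr_fun P.timeInterval.measurableSet_toSet fun x hx => by
      simp only [hwalsh x hx, mul_smul]
  rw [Tile.norm_integral_wp_smul_sq]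
  change 2 ^ P.k * ‖∫ x in P.I, walshFn (P.tile j).l.toNat P.timeInterval x • f x‖ ^ 2 = _
  rw [hint, norm_smul, Real.norm_eq_abs, hs, one_mul]

end Quartile

namespace IsTree

variable {i : ℕ} {top : Quartile} {T : Finset Quartile}

theorem injOn_timeInterval (hT : IsTree i top T) : InjOn Quartile.timeInterval T := by
  rintro ⟨k, n, l⟩ hP ⟨k', n', l'⟩ hQ hPQ
  obtain ⟨ξ, hξ⟩ := (top.tile i).freqInterval.nonempty_toSet
  have hξP := (hT _ hP).freqInterval_subset hξ
  have hξQ := (hT _ hQ).freqInterval_subset hξ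
  simp only [Quartile.timeInterval, DyadicInterval.mk.injEq] at hPQ
  obtain ⟨rfl, rfl⟩ := hPQ
  have hl := congrArg DyadicInterval.n (eq_of_mem_of_mem
    (I := Tile.freqInterval (Quartile.tile ⟨k, n, l⟩ i))
    (J := Tile.freqInterval (Quartile.tile ⟨k, n, l'⟩ i)) rfl hξP hξQ)
  simp only [Tile.freqInterval, Quartile.tile] at hl
  rw [Quartile.mk.injEq]
  omega

theorem sum_norm_integral_wp_smul_sq_le {H : Type*} [NormedAddCommGroup H] [InnerProductSpace ℝ H]
    (hT : IsTree i top T) (hi : i ∈ ({1, 2, 3} : Set ℕ)) {j : ℕ} (hj : j ∈ ({1, 2, 3} : Set ℕ))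
    (hij : i ≠ j) (hTl : ∀ P ∈ T, 0 ≤ P.l) {f : ℝ → H} (hf : ∀ P ∈ T, IntegrableOn f P.I) {δ : ℝ}
    (hδ : 0 ≤ δ) (hTδ : ∀ P ∈ T, ∫ x in P.I, ‖f x‖ ≤ δ * P.len) :
    ∑ P ∈ T, ‖∫ x, (P.tile j).wp x • f x‖ ^ 2 ≤ 24 * δ ^ 2 * top.len := by
  set c := (i - 1) ^^^ (j - 1)
  have hc₄ : 0 < c ∧ c < 4 := by
    rcases hi with rfl | rfl | rfl <;> rcases hj with rfl | rfl | rfl <;>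
      first | contradiction | decide
  set F : ℝ → H := fun x => walshFn (top.tile i).l.toNat top.timeInterval x • f x
  have htop : ∀ P ∈ T, P.timeInterval.toSet ⊆ top.timeInterval.toSet := fun P hP =>
    (hT P hP).I_subset
  have hnorm : ∀ P ∈ T, ∫ x in P.I, ‖F x‖ = ∫ x in P.I, ‖f x‖ := fun P hP =>
    setIntegral_congr_fun P.timeInterval.measurableSet_toSet fun x hx => by
      simp only [F, norm_smul, norm_walshFn _ (htop P hP hx), one_mul]
  calc ∑ P ∈ T, ‖∫ x, (P.tile j).wp x • f x‖ ^ 2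
    _ = ∑ P ∈ T, (2 : ℝ) ^ P.timeInterval.k *
        ‖∫ x in P.timeInterval.toSet, walshFn c P.timeInterval x • F x‖ ^ 2 :=
      Finset.sum_congr rfl fun P hP =>
        Quartile.norm_integral_wp_smul_sq_eq hi hj (hTl P hP) (hT P hP) f
    _ = ∑ I ∈ T.image Quartile.timeInterval, (2 : ℝ) ^ I.k *
        ‖∫ x in I.toSet, walshFn c I x • F x‖ ^ 2 :=
      (Finset.sum_image hT.injOn_timeInterval (f := fun I : DyadicInterval =>
        (2 : ℝ) ^ I.k * ‖∫ x in I.toSet, walshFn c I x • F x‖ ^ 2)).symm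
    _ ≤ 24 * δ ^ 2 * volume.real (⋃ I ∈ T.image Quartile.timeInterval, I.toSet) :=
      sum_norm_setIntegral_walshFn_smul_sq_le hc₄.1 hc₄.2 hδ
        (Finset.forall_mem_image.2 fun P hP => integrableOn_walshFn_smul _ _ (hf P hP))
        (Finset.forall_mem_image.2 fun P hP => by
          rw [P.volume_real_timeInterval]
          exact (hnorm P hP).trans_le (hTδ P hP))
    _ ≤ 24 * δ ^ 2 * top.len := by
      rw [← top.volume_real_timeInterval]
      gcongr
      · exact top.timeInterval.volume_toSet_ne_top
      · exact iUnion₂_subset (Finset.forall_mem_image.2 htop)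

end IsTree

theorem setIntegral_norm_le_measureReal_inter {α V : Type*} [MeasurableSpace α] {μ : Measure α}
    [NormedAddCommGroup V] {g : α → V} {A E : Set α} (hA : MeasurableSet A) (hμA : μ A ≠ ⊤)
    (hg : ∀ x, ‖g x‖ ≤ 1) (hgE : ∀ x ∉ E, g x = 0) :
    ∫ x in A, ‖g x‖ ∂μ ≤ μ.real (E ∩ A) := by
  have hinter : ∫ x in E ∩ A, ‖g x‖ ∂μ = ∫ x in A, ‖g x‖ ∂μ :=
    (setIntegral_eq_of_subset_of_forall_sdiff_eq_zero hA inter_subset_right fun x hx => by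
      rw [hgE x fun hE => hx.2 ⟨hE, hx.1⟩, norm_zero]).symm
  rw [← hinter, ← one_mul (μ.real _)]
  exact (le_abs_self _).trans <| norm_setIntegral_le_of_norm_le_const
    (measure_lt_top_of_subset inter_subset_right hμA) fun x _ => (norm_norm _).trans_le (hg x)

theorem sSup_average_le_sSup_density (Ps : Finset Quartile) {V : Type*} [NormedAddCommGroup V]
    {f : ℝ → V} {E : Set ℝ} (hf : ∀ x, ‖f x‖ ≤ 1) (hfE : ∀ x ∉ E, f x = 0) :
    sSup ((fun P : Quartile => (∫ x in P.I, ‖f x‖) / P.len) '' (Ps : Set Quartile)) ≤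
      sSup ((fun P : Quartile => (volume (E ∩ P.I)).toReal / P.len) '' (Ps : Set Quartile)) := by
  refine Real.sSup_le (forall_mem_image.2 fun P hP => ?_) (Real.sSup_nonneg <|
    forall_mem_image.2 fun P _ => div_nonneg ENNReal.toReal_nonneg P.len_pos.le)
  refine le_trans ?_ (le_csSup (Ps.finite_toSet.image _).bddAbove (mem_image_of_mem _ hP))
  exact div_le_div_of_nonneg_right (setIntegral_norm_le_measureReal_inter
    P.timeInterval.measurableSet_toSet P.timeInterval.volume_toSet_ne_top hf hfE) P.len_pos.le

theorem size_le_density_general {Ps : Finset Quartile} (hPs : ∀ P ∈ Ps, 0 ≤ P.l) {j : ℕ}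
    (hj : j ∈ ({1, 2, 3} : Set ℕ)) {f : ℝ → ℂ} (hf : ∀ P ∈ Ps, IntegrableOn f P.I) :
    size Ps j (fun P => ∫ x, (P.tile j).wp x • f x) ≤
      5 * sSup ((fun P : Quartile => (∫ x in P.I, ‖f x‖) / P.len) '' (Ps : Set Quartile)) := by
  set δ := sSup ((fun P : Quartile => (∫ x in P.I, ‖f x‖) / P.len) '' (Ps : Set Quartile))
  have hδ : 0 ≤ δ := Real.sSup_nonneg <| forall_mem_image.2 fun P _ => by
    have := P.len_pos
    positivity
  have hPsδ : ∀ P ∈ Ps, ∫ x in P.I, ‖f x‖ ≤ δ * P.len := fun P hP =>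
    (div_le_iff₀ P.len_pos).1 <|
      le_csSup (Ps.finite_toSet.image _).bddAbove (mem_image_of_mem _ hP)
  refine Real.sSup_le (forall_mem_image.2 ?_) (by positivity)
  rintro ⟨top, T⟩ ⟨hTPs, i, hi, hij, hT⟩
  have htree := hT.sum_norm_integral_wp_smul_sq_le hi hj hij (fun P hP => hPs P (hTPs hP))
    (fun P hP => hf P (hTPs hP)) hδ (fun P hP => hPsδ P (hTPs hP))
  refine Real.sqrt_le_iff.2 ⟨by positivity, (div_le_iff₀ top.len_pos).2 (htree.trans ?_)⟩
  have := top.len_pos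
  rw [mul_pow]
  gcongr
  norm_num

/-- the size of the coefficients of `f ∈ X(E)` is bounded by
`sup_{P∈Ps} |E ∩ I_P|/|I_P|`, with an absolute constant. -/
theorem size_le_density :
    ∃ C : ℝ, 0 < C ∧ ∀ (Ps : Finset Quartile), (∀ P ∈ Ps, 0 ≤ P.l) →
      ∀ j ∈ ({1,2,3} : Set ℕ), ∀ E : Set ℝ, MeasurableSet E → volume E < ⊤ →
      ∀ f : ℝ → ℝ, Measurable f → (∀ x, |f x| ≤ 1) → (∀ x, x ∉ E → f x = 0) →
      size Ps j (fun P => ((∫ x : ℝ, f x * (P.tile j).wp x : ℝ) : ℂ)) ≤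
        C * sSup ((fun P : Quartile =>
          (volume (E ∩ P.I)).toReal / P.len) '' (Ps : Set Quartile)) := by
  refine ⟨5, by norm_num, fun Ps hPs j hj E _ _ f hf hf₁ hfE => ?_⟩
  have hnorm : ∀ x, ‖(f x : ℂ)‖ ≤ 1 := fun x => (Complex.norm_real _).trans_le (hf₁ x)
  have hint : ∀ P ∈ Ps, IntegrableOn (fun x => (f x : ℂ)) P.I := fun P _ =>
    Measure.integrableOn_of_bounded P.timeInterval.volume_toSet_ne_top
      hf.complex_ofReal.aestronglyMeasurable (.of_forall hnorm)
  simp only [Tile.ofReal_integral_mul_wp]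
  exact (size_le_density_general hPs hj hint).trans <| mul_le_mul_of_nonneg_left
    (sSup_average_le_sSup_density Ps hnorm fun x hx => by rw [hfE x hx, Complex.ofReal_zero])
    (by norm_num)
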